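/- Let φ̂ : [0,∞) → ℝ be Borel measurable with ∫₀^∞ r³ φ̂(r)² dr = 1/(2π), suppose r ↦ r φ̂(r) is monotone on (0, ∞), and suppose φ̂(r) ≥ 0 for all r ∈ (0,∞). Then the limit φ(ρ) := lim_{R→∞} (1/(2π²ρ)) ∫₀^R r φ̂(r) sin(ρ r) dr satisfies φ(ρ) ≥ 0 for all ρ ∈ (0,∞); in fact ∫₀^R r φ̂(r) sin(ρ r) dr ≥ 0 for all ρ > 0 and R > 0. -/

import Mathlib

/-!
A nonnegative nonincreasing `g` is a superposition of indicators of initial segments: by the layer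
cake formula `∫ g f = ∫ (∫ f over {g > t}) dt`, and each superlevel set `{g > t}` is, up to a null
set, an interval starting at the left endpoint. Hence `∫ g f ≥ 0` as soon as all the primitives
`∫₀ᶜ f` are nonnegative, which for `f r = sin (ρ r)` are `(1 - cos (ρ c)) / ρ`.

With `g r = r φ̂(r)`, the normalization makes `r g(r)²` integrable on `(0, ∞)`. If `g` is
nondecreasing so is `r g(r)²`, and then integrability forces `g = 0`: only nonincreasing `g` matter.
Near `0`, where `g` may blow up, `r g ≤ r + r g²` makes `r g(r)`, hence `g(r) sin (ρ r)`,
integrable.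
-/

open MeasureTheory Real Filter
open scoped Topology

open Set

section LayerCake

variable {α E : Type*} [MeasurableSpace α] [NormedAddCommGroup E] [NormedSpace ℝ E]
  {μ : Measure α} {g : α → ℝ} {f : α → E}

lemma setIntegral_Ioi_zero_indicator_Iio_const [CompleteSpace E] {y : ℝ} (hy : 0 ≤ y) (v : E) :
    ∫ t in Ioi (0 : ℝ), (Iio y).indicator (fun _ ↦ v) t = y • v := by
  rw [setIntegral_indicator measurableSet_Iio, Ioi_inter_Iio, setIntegral_const]
  simp [hy]

lemma integrable_prod_indicator_lt (hg : AEMeasurable g μ) (hg0 : 0 ≤ᵐ[μ] g)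
    (hf : AEStronglyMeasurable f μ) (hgf : Integrable (fun x ↦ g x • f x) μ) :
    Integrable (fun p : α × ℝ ↦ (Iio (g p.1)).indicator (fun _ ↦ f p.1) p.2)
      (μ.prod (volume.restrict (Ioi 0))) := by
  have hmeas : AEStronglyMeasurable
      (fun p : α × ℝ ↦ (Iio (g p.1)).indicator (fun _ ↦ f p.1) p.2)
      (μ.prod (volume.restrict (Ioi 0))) :=
    hf.comp_fst.indicator₀ (nullMeasurableSet_lt measurable_snd.aemeasurable hg.comp_fst)
  refine (integrable_prod_iff hmeas).2 ⟨.of_forall fun x ↦ ?_, hgf.norm.congr ?_⟩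
  · have hfin : volume.restrict (Ioi (0 : ℝ)) (Iio (g x)) ≠ ⊤ := by
      simp [Measure.restrict_apply measurableSet_Iio, Iio_inter_Ioi]
    exact (integrableOn_const (C := f x) hfin).integrable_indicator measurableSet_Iio
  · filter_upwards [hg0] with x hx
    simp only [norm_indicator_eq_indicator_norm]
    rw [setIntegral_Ioi_zero_indicator_Iio_const hx, norm_smul, norm_of_nonneg hx, smul_eq_mul]

theorem integral_smul_eq_integral_setIntegral_lt [CompleteSpace E] [SFinite μ]
    (hg : AEMeasurable g μ) (hg0 : 0 ≤ᵐ[μ] g) (hf : AEStronglyMeasurable f μ)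
    (hgf : Integrable (fun x ↦ g x • f x) μ) :
    ∫ x, g x • f x ∂μ = ∫ t in Ioi (0 : ℝ), ∫ x in {x | t < g x}, f x ∂μ :=
  calc ∫ x, g x • f x ∂μ
      = ∫ x, (∫ t in Ioi (0 : ℝ), (Iio (g x)).indicator (fun _ ↦ f x) t) ∂μ :=
        integral_congr_ae <| hg0.mono fun _ hx ↦
          (setIntegral_Ioi_zero_indicator_Iio_const hx _).symm
    _ = ∫ t in Ioi (0 : ℝ), ∫ x, {x | t < g x}.indicator f x ∂μ :=
        integral_integral_swap (integrable_prod_indicator_lt hg hg0 hf hgf)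
    _ = ∫ t in Ioi (0 : ℝ), ∫ x in {x | t < g x}, f x ∂μ := by
        simp only [integral_indicator₀ (nullMeasurableSet_lt aemeasurable_const hg)]

end LayerCake

lemma exists_ae_eq_Ioc_of_forall_Ioc_subset {α : Type*} [ConditionallyCompleteLinearOrder α]
    [MeasurableSpace α] {μ : Measure α} [NullSingletonClass μ] {a b : α} (hab : a ≤ b) {s : Set α}
    (hs : s ⊆ Ioc a b) (hlower : ∀ x ∈ s, Ioc a x ⊆ s) :
    ∃ c ∈ Icc a b, s =ᵐ[μ] Ioc a c := by
  rcases s.eq_empty_or_nonempty with rfl | hne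
  · exact ⟨a, left_mem_Icc.2 hab, by simp⟩
  have hbdd : BddAbove s := bddAbove_Ioc.mono hs
  have hle : s ⊆ Ioc a (sSup s) := fun x hx ↦ ⟨(hs hx).1, le_csSup hbdd hx⟩
  have hge : Ioo a (sSup s) ⊆ s := fun x hx ↦ by
    obtain ⟨y, hy, hxy⟩ := exists_lt_of_lt_csSup hne hx.2
    exact hlower y hy ⟨hx.1, hxy.le⟩
  obtain ⟨y, hy⟩ := hne
  exact ⟨sSup s, ⟨(hle hy).1.le.trans (hle hy).2, csSup_le ⟨y, hy⟩ fun x hx ↦ (hs hx).2⟩,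
    hle.eventuallyLE.antisymm (Ioo_ae_eq_Ioc.symm.le.trans hge.eventuallyLE)⟩

theorem intervalIntegral_mul_nonneg_of_antitoneOn_of_primitive_nonneg {μ : Measure ℝ} [SFinite μ]
    [NullSingletonClass μ] {g f : ℝ → ℝ} {a b : ℝ} (hab : a ≤ b)
    (hg : AntitoneOn g (Ioc a b)) (hg0 : ∀ x ∈ Ioc a b, 0 ≤ g x) (hf : IntervalIntegrable f μ a b)
    (hgf : IntervalIntegrable (fun x ↦ g x * f x) μ a b)
    (hprim : ∀ c ∈ Icc a b, 0 ≤ ∫ x in a..c, f x ∂μ) :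
    0 ≤ ∫ x in a..b, g x * f x ∂μ := by
  have hgm : AEMeasurable g (μ.restrict (Ioc a b)) :=
    aemeasurable_restrict_of_antitoneOn measurableSet_Ioc hg
  rw [intervalIntegral.integral_of_le hab]
  simp only [← smul_eq_mul]
  rw [integral_smul_eq_integral_setIntegral_lt hgm
    (ae_restrict_of_forall_mem measurableSet_Ioc hg0) hf.aestronglyMeasurable hgf.1]
  refine setIntegral_nonneg measurableSet_Ioi fun t _ ↦ ?_
  obtain ⟨c, hc, hae⟩ := exists_ae_eq_Ioc_of_forall_Ioc_subset (μ := μ) hab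
    (s := {x | t < g x} ∩ Ioc a b) inter_subset_right fun x hx y hy ↦
      have hyb : y ∈ Ioc a b := ⟨hy.1, hy.2.trans hx.2.2⟩
      ⟨hx.1.trans_le (hg hyb hx.2 hy.2), hyb⟩
  rw [Measure.restrict_restrict₀ (nullMeasurableSet_lt aemeasurable_const hgm),
    setIntegral_congr_set hae, ← intervalIntegral.integral_of_le hc.1]
  exact hprim c hc

lemma nonpos_of_monotoneOn_of_integrableOn_Ioi {F : ℝ → ℝ} {a x : ℝ}
    (hF : MonotoneOn F (Ioi a)) (hint : IntegrableOn F (Ioi a)) (hx : a < x) : F x ≤ 0 := by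
  by_contra! hpos
  have hconst : IntegrableOn (fun _ ↦ F x) (Ioi x) := by
    refine Integrable.mono' (hint.mono_set (Ioi_subset_Ioi hx.le)) aestronglyMeasurable_const ?_
    refine ae_restrict_of_forall_mem measurableSet_Ioi fun y (hy : x < y) ↦ ?_
    rw [norm_of_nonneg hpos.le]
    exact hF hx (hx.trans hy) hy.le
  simp [integrableOn_const_iff, hpos.ne'] at hconst

lemma eqOn_zero_of_monotoneOn_of_integrableOn_mul_sq {g : ℝ → ℝ} (hg : MonotoneOn g (Ioi 0))
    (hg0 : ∀ r, 0 < r → 0 ≤ g r) (hint : IntegrableOn (fun r ↦ r * g r ^ 2) (Ioi 0)) :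
    EqOn g 0 (Ioi 0) := by
  intro r (hr : 0 < r)
  have hmono : MonotoneOn (fun r ↦ r * g r ^ 2) (Ioi 0) := fun x (hx : 0 < x) y hy hxy ↦
    mul_le_mul hxy (pow_le_pow_left₀ (hg0 x hx) (hg hx hy hxy) 2) (sq_nonneg _) (hx.le.trans hxy)
  have hle : r * g r ^ 2 ≤ 0 :=
    nonpos_of_monotoneOn_of_integrableOn_Ioi (F := fun r ↦ r * g r ^ 2) hmono hint hr
  exact sq_nonpos_iff _ |>.1 (nonpos_of_mul_nonpos_right hle hr)

lemma antitoneOn_of_integrableOn_mul_sq {g : ℝ → ℝ}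
    (hg : MonotoneOn g (Ioi 0) ∨ AntitoneOn g (Ioi 0)) (hg0 : ∀ r, 0 < r → 0 ≤ g r)
    (hint : IntegrableOn (fun r ↦ r * g r ^ 2) (Ioi 0)) : AntitoneOn g (Ioi 0) :=
  hg.elim (fun hmono ↦ antitoneOn_const.congr
    (eqOn_zero_of_monotoneOn_of_integrableOn_mul_sq hmono hg0 hint).symm) id

lemma integrable_mul_of_integrable_mul_sq {α : Type*} [MeasurableSpace α] {μ : Measure α}
    {w g : α → ℝ} (hg : AEStronglyMeasurable g μ) (hw : Integrable w μ)
    (hwg : Integrable (fun x ↦ w x * g x ^ 2) μ) : Integrable (fun x ↦ w x * g x) μ := by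
  refine (hw.norm.add hwg.norm).mono' (hw.aestronglyMeasurable.mul hg) (.of_forall fun x ↦ ?_)
  have hle : |g x| ≤ 1 + g x ^ 2 := by
    rw [← sq_abs]
    nlinarith [sq_nonneg (|g x| - 1)]
  calc ‖w x * g x‖ = |w x| * |g x| := abs_mul _ _
    _ ≤ |w x| * (1 + g x ^ 2) := by gcongr
    _ = ‖w x‖ + ‖w x * g x ^ 2‖ := by
      rw [norm_mul, norm_of_nonneg (sq_nonneg (g x)), norm_eq_abs]
      ring

lemma intervalIntegrable_id_mul_of_integrableOn_mul_sq {g : ℝ → ℝ} {R : ℝ} (hR : 0 ≤ R)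
    (hg : AEStronglyMeasurable g (volume.restrict (Ioc 0 R)))
    (hint : IntegrableOn (fun r ↦ r * g r ^ 2) (Ioc 0 R)) :
    IntervalIntegrable (fun r ↦ r * g r) volume 0 R :=
  (intervalIntegrable_iff_integrableOn_Ioc_of_le hR).2 <|
    integrable_mul_of_integrable_mul_sq hg (continuous_id.intervalIntegrable 0 R).1 hint

lemma intervalIntegrable_mul_sin {g : ℝ → ℝ} {a b : ℝ}
    (hg : IntervalIntegrable (fun r ↦ r * g r) volume a b) (ρ : ℝ) :
    IntervalIntegrable (fun r ↦ g r * sin (ρ * r)) volume a b := by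
  have hsinc : (fun r ↦ g r * sin (ρ * r)) = fun r ↦ r * g r * (ρ * sinc (ρ * r)) := by
    ext r
    rcases eq_or_ne (ρ * r) 0 with h | h
    · rcases mul_eq_zero.1 h with rfl | rfl <;> simp
    · rw [sinc_of_ne_zero h]
      field_simp [left_ne_zero_of_mul h, right_ne_zero_of_mul h]
  rw [hsinc]
  exact hg.mul_continuousOn
    (continuous_const.mul (continuous_sinc.comp (continuous_const_mul ρ))).continuousOn

lemma intervalIntegral_sin_mul_nonneg {ρ : ℝ} (hρ : 0 < ρ) (c : ℝ) :
    0 ≤ ∫ r in (0 : ℝ)..c, sin (ρ * r) := by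
  rw [intervalIntegral.integral_comp_mul_left _ hρ.ne', integral_sin, mul_zero, cos_zero]
  exact mul_nonneg (inv_nonneg.2 hρ.le) (sub_nonneg.2 (cos_le_one _))

theorem intervalIntegral_mul_sin_nonneg_of_antitoneOn {g : ℝ → ℝ} {ρ R : ℝ} (hρ : 0 < ρ)
    (hR : 0 ≤ R) (hg : AntitoneOn g (Ioc 0 R)) (hg0 : ∀ r ∈ Ioc 0 R, 0 ≤ g r)
    (hint : IntervalIntegrable (fun r ↦ r * g r) volume 0 R) :
    0 ≤ ∫ r in (0 : ℝ)..R, g r * sin (ρ * r) :=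
  intervalIntegral_mul_nonneg_of_antitoneOn_of_primitive_nonneg hR hg hg0
    ((continuous_sin.comp (continuous_const_mul ρ)).intervalIntegrable 0 R)
    (intervalIntegrable_mul_sin hint ρ) fun c _ ↦ intervalIntegral_sin_mul_nonneg hρ c

theorem stmt14_general {g : ℝ → ℝ} (hg : AntitoneOn g (Ioi 0)) (hg0 : ∀ r, 0 < r → 0 ≤ g r)
    (hint : ∀ R, 0 < R → IntervalIntegrable (fun r ↦ r * g r) volume 0 R) :
    (∀ ρ R : ℝ, 0 < ρ → 0 < R → 0 ≤ ∫ r in (0 : ℝ)..R, g r * sin (ρ * r)) ∧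
    ∀ ρ : ℝ, 0 < ρ → ∀ l : ℝ,
      Tendsto (fun R ↦ (1 / (2 * π ^ 2 * ρ)) * ∫ r in (0 : ℝ)..R, g r * sin (ρ * r))
        atTop (𝓝 l) → 0 ≤ l := by
  have hnonneg (ρ R : ℝ) (hρ : 0 < ρ) (hR : 0 < R) :
      0 ≤ ∫ r in (0 : ℝ)..R, g r * sin (ρ * r) :=
    intervalIntegral_mul_sin_nonneg_of_antitoneOn hρ hR.le (hg.mono Ioc_subset_Ioi_self)
      (fun r hr ↦ hg0 r hr.1) (hint R hR)
  refine ⟨hnonneg, fun ρ hρ l hl ↦ ge_of_tendsto hl ?_⟩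
  filter_upwards [eventually_gt_atTop 0] with R hR
  exact mul_nonneg (by positivity) (hnonneg ρ R hρ hR)

/-- If `φ̂` is Borel measurable with `∫₀^∞ r³ φ̂(r)² dr = 1/(2π)`,
`r ↦ r φ̂(r)` is monotone on `(0, ∞)`, and `φ̂ ≥ 0` on `(0,∞)`, then
`∫₀^R r φ̂(r) sin(ρr) dr ≥ 0` for all `ρ, R > 0`, and any limit
`φ(ρ) = lim_{R→∞} (1/(2π²ρ)) ∫₀^R r φ̂(r) sin(ρr) dr` is nonnegative. -/
theorem stmt14 (φh : ℝ → ℝ) (hmeas : Measurable φh)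
    (hnorm : ∫ r in Set.Ioi (0 : ℝ), r ^ 3 * (φh r) ^ 2 = 1 / (2 * π))
    (hmono : MonotoneOn (fun r => r * φh r) (Set.Ioi (0 : ℝ)) ∨
      AntitoneOn (fun r => r * φh r) (Set.Ioi (0 : ℝ)))
    (hpos : ∀ r : ℝ, 0 < r → 0 ≤ φh r) :
    (∀ ρ R : ℝ, 0 < ρ → 0 < R → 0 ≤ ∫ r in (0 : ℝ)..R, r * φh r * Real.sin (ρ * r)) ∧
    ∀ ρ : ℝ, 0 < ρ → ∀ l : ℝ,
      Tendsto (fun R => (1 / (2 * π ^ 2 * ρ)) * ∫ r in (0 : ℝ)..R, r * φh r * Real.sin (ρ * r))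
        atTop (𝓝 l) → 0 ≤ l := by
  have hg0 (r : ℝ) (hr : 0 < r) : 0 ≤ r * φh r := mul_nonneg hr.le (hpos r hr)
  have hint : IntegrableOn (fun r ↦ r * (r * φh r) ^ 2) (Ioi 0) := by
    have hne : (∫ r in Ioi (0 : ℝ), r ^ 3 * φh r ^ 2) ≠ 0 := by
      rw [hnorm]
      positivity
    exact (Integrable.of_integral_ne_zero hne).congr (.of_forall fun r ↦ by ring)
  exact stmt14_general (antitoneOn_of_integrableOn_mul_sq hmono hg0 hint) hg0 fun _ hR ↦
    intervalIntegrable_id_mul_of_integrableOn_mul_sq hR.le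
      (measurable_id.mul hmeas).aestronglyMeasurable (hint.mono_set Ioc_subset_Ioi_self)
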